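/- arXiv:2503.17572 — 2 statements merged into one kernel-verified Lean document; each statement's English description precedes it below -/
import Mathlib

section
/- For every delayable learning restriction δ, the collection of classes of languages learnable with full information from canonical informants equals the collection learnable set-drivenly from arbitrary informants: [Inf_can G δ] = [Inf Sd δ]. -/
open Filter Classical

namespace InfBc

/-! ### Basic notions: r.e. sets, informants, learners -/

/-- The `e`-th recursively enumerable set (via an acceptable numbering of
partial computable functions, `W e = dom φ_e`). -/
def W (e : ℕ) : Set ℕ := {x | ((Denumerable.ofNat Nat.Partrec.Code e).eval x).Dom}

/-- A language is recursively enumerable. -/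
def RE (L : Set ℕ) : Prop := ∃ e, W e = L

abbrev Datum := ℕ × Bool
abbrev Seq := List Datum
abbrev Informant := ℕ → Datum
abbrev HypSeq := ℕ → Part ℕ
/-- Learners are partial functions; all input types are coded into `ℕ`. -/
abbrev Learner := ℕ →. ℕ
abbrev Restriction := HypSeq → Informant → Prop

/-- Positive information of an infinite sequence. -/
def posI (I : Informant) : Set ℕ := {x | ∃ n, I n = (x, true)}
/-- Negative information of an infinite sequence. -/
def negI (I : Informant) : Set ℕ := {x | ∃ n, I n = (x, false)}

/-- `I` is an informant for the language `L`. -/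
def IsInformant (I : Informant) (L : Set ℕ) : Prop := posI I = L ∧ negI I = Lᶜ

/-- `I` is an informant (for some language), i.e. `I ∈ Inf`. -/
def IsInf (I : Informant) : Prop := IsInformant I (posI I)

/-- `I` is a canonical informant. -/
def Canonical (I : Informant) : Prop := ∀ x, I x = (x, true) ∨ I x = (x, false)

/-- `I[n]`, the length-`n` initial segment of `I`. -/
def segment (I : Informant) (n : ℕ) : Seq := (List.range n).map I

/-- Positive information of a finite sequence. -/
def posS (σ : Seq) : Set ℕ := {x | (x, true) ∈ σ}
/-- Negative information of a finite sequence. -/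
def negS (σ : Seq) : Set ℕ := {x | (x, false) ∈ σ}
/-- The content of a finite sequence, as a set. -/
def contentS (σ : Seq) : Set Datum := {a | a ∈ σ}

/-! ### Interaction operators -/

abbrev InteractionOperator := Learner → Informant → HypSeq

/-- Full-information (Gold-style) interaction: `G(h,I)(i) = h(I[i])`. -/
def Gop : InteractionOperator := fun h I i => h (Encodable.encode (segment I i))

/-- Set-driven interaction: `Sd(h,I)(i) = h(content(I[i]))`. -/
def Sdop : InteractionOperator := fun h I i => h (Encodable.encode (segment I i).toFinset)

/-- The iterated evaluation of an iterative learner on a finite sequence: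
start with the initial hypothesis `h(none)` and feed the data one by one. -/
def iterExtend (h : Learner) (σ : Seq) : Part ℕ :=
  σ.foldl (fun pe a => pe.bind fun e => h (Encodable.encode (some (e, a))))
    (h (Encodable.encode (none : Option (ℕ × Datum))))

/-- Iterative interaction: `It(h,I)(i)` is obtained by feeding `I[i]` one datum
at a time, each time updating the previous hypothesis. -/
def Itop : InteractionOperator := fun h I i => iterExtend h (segment I i)

/-- An iterative learner is confluent if the order and multiplicity in which
the content is presented does not matter. -/
def ConfluentLearner (h : Learner) : Prop :=
  ∀ σ τ : Seq, contentS σ = contentS τ → iterExtend h σ = iterExtend h τ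

/-- Confluently iterative interaction. -/
noncomputable def CflItop : InteractionOperator := fun h I i =>
  if ConfluentLearner h then iterExtend h (segment I i) else Part.none

/-- `β ≼ β'`: every (partial computable) `β`-learner can be translated into a
`β'`-learner with the same hypothesis sequence on every informant. -/
def OpLe (β β' : InteractionOperator) : Prop :=
  ∀ h : Learner, Partrec h → ∃ h' : Learner, Partrec h' ∧
    ∀ I : Informant, IsInf I → ∀ n, β h I n = β' h' I n

/-! ### Learning restrictions -/

/-- The trivial restriction `T`. -/
def TT : Restriction := fun _ _ => True

/-- Explanatory identification. -/
def Ex : Restriction := fun p I =>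
  ∃ q, W q = posI I ∧ ∀ᶠ n in atTop, p n = Part.some q

/-- Behaviorally correct identification. -/
def Bc : Restriction := fun p I => ∀ᶠ n in atTop, ∃ e ∈ p n, W e = posI I

/-- Consistency of a hypothesis with a finite sequence of data. -/
def ConsH (e : ℕ) (σ : Seq) : Prop := posS σ ⊆ W e ∧ negS σ ∩ W e = ∅

/-- Consistency of a hypothesis sequence with an informant. -/
def Cons : Restriction := fun p I => ∀ n, ∃ e ∈ p n, ConsH e (segment I n)

/-- Strongly monotone. -/
def SMon : Restriction := fun p _ =>
  ∀ s t, s ≤ t → ∀ e ∈ p s, ∀ e' ∈ p t, W e ⊆ W e'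

/-- Dual strongly monotone. -/
def SMond : Restriction := fun p _ =>
  ∀ s t, s ≤ t → ∀ e ∈ p s, ∀ e' ∈ p t, W e' ⊆ W e

/-- Monotone. -/
def Mon : Restriction := fun p I =>
  ∀ s t, s ≤ t → ∀ e ∈ p s, ∀ e' ∈ p t, W e ∩ posI I ⊆ W e' ∩ posI I

/-- Dual monotone. -/
def Mond : Restriction := fun p I =>
  ∀ s t, s ≤ t → ∀ e ∈ p s, ∀ e' ∈ p t, (W e)ᶜ ∩ negI I ⊆ (W e')ᶜ ∩ negI I

/-- Weakly monotone. -/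
def WMon : Restriction := fun p I =>
  ∀ s t, s ≤ t → ∀ e ∈ p s, ConsH e (segment I t) → ∀ e' ∈ p t, W e ⊆ W e'

/-- Dual weakly monotone. -/
def WMond : Restriction := fun p I =>
  ∀ s t, s ≤ t → ∀ e ∈ p s, ConsH e (segment I t) → ∀ e' ∈ p t, W e' ⊆ W e

/-- Cautious. -/
def Caut : Restriction := fun p _ =>
  ∀ s t, s < t → ∀ e ∈ p s, ∀ e' ∈ p t, ¬ W e' ⊂ W e

/-- Target cautious. -/
def CautTar : Restriction := fun p I =>
  ∀ s, ∀ e ∈ p s, ¬ posI I ⊂ W e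

/-- Finitely cautious. -/
def CautFin : Restriction := fun p _ =>
  ∀ s t, s < t → ∀ e ∈ p s, ∀ e' ∈ p t, W e' ⊂ W e → (W e').Infinite

/-- Infinitely cautious. -/
def CautInf : Restriction := fun p _ =>
  ∀ s t, s < t → ∀ e ∈ p s, ∀ e' ∈ p t, W e' ⊂ W e → (W e').Finite

/-! ### Learnability -/

/-- The class of admissible learners: all partial computable learners. -/
def AllL : Learner → Prop := fun _ => True
/-- The class of admissible learners: total computable learners (`ℛ`). -/
def TotalL : Learner → Prop := fun h => ∀ x, (h x).Dom
/-- Admissible informants: all informants (`Inf`). -/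
def AllI : Informant → Prop := fun _ => True

/-- `h` learns `L` in the setting given by admissible informants `P`,
interaction operator `β` and local restriction `δ`. -/
def LearnsWith (P : Informant → Prop) (β : InteractionOperator) (δ : Restriction)
    (h : Learner) (L : Set ℕ) : Prop :=
  RE L ∧ ∀ I : Informant, P I → IsInformant I L → δ (β h I) I

/-- `[τ(α) C P β δ]`: the collection of all classes of languages learnable by
some learner in `C` that satisfies the global restriction `α` on all admissible
informants, under interaction operator `β` and local restriction `δ`. -/
def Learnable (α : Restriction) (C : Learner → Prop) (P : Informant → Prop)
    (β : InteractionOperator) (δ : Restriction) : Set (Set (Set ℕ)) :=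
  {𝓛 | ∃ h : Learner, Partrec h ∧ C h ∧
        (∀ I : Informant, IsInf I → P I → α (β h I) I) ∧
        ∀ L ∈ 𝓛, LearnsWith P β δ h L}

/-! ### Properties of restrictions -/

/-- A learning restriction is delayable if it is preserved under postponing
hypotheses along a non-decreasing unbounded function. -/
def Delayable (δ : Restriction) : Prop :=
  ∀ I I' : Informant, IsInf I → IsInf I' → Set.range I = Set.range I' →
    ∀ (p : HypSeq) (s : ℕ → ℕ), Monotone s → (∀ m, ∃ n, m ≤ s n) →
      δ p I → (∀ n, contentS (segment I (s n)) ⊆ contentS (segment I' n)) →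
      δ (fun n => p (s n)) I'

/-- A learning restriction is semantic if it is indifferent to replacing the
hypothesis sequence by a semantically equivalent one. -/
def Semantic (δ : Restriction) : Prop :=
  ∀ (p p' : HypSeq) (I : Informant), δ p I →
    (∀ i, (p i).Dom ↔ (p' i).Dom) →
    (∀ i, ∀ e ∈ p i, ∀ e' ∈ p' i, W e = W e') →
    δ p' I


/-!
An informant for `L` lists exactly the data of the canonical informant for `L`, in some order and
possibly with repetitions. Hence from the content of `I[n]` one can compute the longest initial
segment of the canonical informant contained in it. Running a `G`-learner on that segment is
set-driven, and yields its hypotheses on the canonical informant, delayed by the length of the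
segment. This length is non-decreasing and unbounded in `n`, so a delayable restriction survives.

Conversely, an initial segment of a canonical informant is recovered from its content by sorting.
Mathlib encodes a finite set as the list of its elements sorted by code, and the segment is already
sorted by code, so it and its content even have the same code: on canonical informants every learner
behaves the same under `G` and `Sd`.
-/

section Encoding

open Encodable

variable {α : Type*} [Encodable α]

theorem exists_sorted_list_encode_eq (s : Finset α) :
    ∃ l : List α, encode s = encode l ∧ (l : Multiset α) = s.val ∧
      l.Pairwise fun a b => encode a ≤ encode b :=
  have : IsLinearOrder α fun a b => encode a ≤ encode b :=
    (RelEmbedding.preimage ⟨encode, encode_injective⟩ (· ≤ ·)).isLinearOrder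
  ⟨s.val.sort fun a b => encode a ≤ encode b, rfl, s.val.sort_eq _, s.val.pairwise_sort _⟩

theorem exists_list_encode_eq (s : Finset α) :
    ∃ l : List α, encode s = encode l ∧ ∀ a, a ∈ l ↔ a ∈ s := by
  obtain ⟨l, hcode, hl, -⟩ := exists_sorted_list_encode_eq s
  exact ⟨l, hcode, fun a => by rw [← Finset.mem_val, ← hl, Multiset.mem_coe]⟩

theorem encode_toFinset_of_pairwise_encode_lt [DecidableEq α] {l : List α}
    (hl : l.Pairwise fun a b => encode a < encode b) : encode l.toFinset = encode l := by
  obtain ⟨l', hcode, hl', hsorted⟩ := exists_sorted_list_encode_eq l.toFinset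
  have hnodup : l.Nodup := hl.imp fun hab => ne_of_apply_ne encode hab.ne
  have hperm : l'.Perm l := by
    rw [← Multiset.coe_eq_coe, hl', List.toFinset_val, hnodup.dedup]
  have hl'_eq : l' = l := hperm.eq_of_pairwise
    (fun a b _ _ hab hba => encode_injective (hab.antisymm hba)) hsorted (hl.imp le_of_lt)
  rw [hcode, hl'_eq]

theorem pair_lt_pair_of_lt_of_le {x y b : ℕ} (hxy : x < y) (hby : b ≤ y) (c : ℕ) :
    Nat.pair x b < Nat.pair y c := by
  unfold Nat.pair
  split_ifs <;> nlinarith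

theorem encode_datum_lt {x y : ℕ} (hxy : x < y) (b c : Bool) :
    encode ((x, b) : Datum) < encode ((y, c) : Datum) := by
  have hb : encode b ≤ 1 := by cases b <;> simp
  exact pair_lt_pair_of_lt_of_le hxy (hb.trans (by omega)) _

end Encoding

theorem contentS_segment (I : Informant) (n : ℕ) : contentS (segment I n) = I '' Set.Iio n := by
  ext a
  simp [contentS, segment]

theorem contentS_segment_mono (I : Informant) : Monotone fun n => contentS (segment I n) := by
  intro m n hmn
  simp only [contentS_segment]
  exact Set.image_mono (Set.Iio_subset_Iio hmn)

theorem contentS_segment_subset_range (I : Informant) (n : ℕ) :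
    contentS (segment I n) ⊆ Set.range I := by
  rw [contentS_segment]
  exact Set.image_subset_range I _

theorem Canonical.fst_apply {I : Informant} (hI : Canonical I) (x : ℕ) : (I x).1 = x := by
  rcases hI x with h | h <;> rw [h]

theorem Canonical.pairwise_encode_lt_segment {I : Informant} (hI : Canonical I) (n : ℕ) :
    (segment I n).Pairwise fun a b => Encodable.encode a < Encodable.encode b := by
  refine List.pairwise_map.2 (List.pairwise_lt_range.imp fun {x y} hxy => ?_)
  exact encode_datum_lt (by rwa [hI.fst_apply, hI.fst_apply]) (I x).2 (I y).2

theorem Canonical.Gop_eq_Sdop {I : Informant} (hI : Canonical I) (h : Learner) :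
    Gop h I = Sdop h I :=
  funext fun n =>
    congrArg h (encode_toFinset_of_pairwise_encode_lt (hI.pairwise_encode_lt_segment n)).symm

theorem LearnsWith.Gop_of_Sdop {δ : Restriction} {h : Learner} {L : Set ℕ}
    (hL : LearnsWith AllI Sdop δ h L) : LearnsWith Canonical Gop δ h L :=
  ⟨hL.1, fun I hcan hI => by rw [hcan.Gop_eq_Sdop]; exact hL.2 I trivial hI⟩

/-- The canonical informant for the language `L`. -/
noncomputable def canonicalInformant (L : Set ℕ) : Informant := fun x => (x, decide (x ∈ L))

theorem canonical_canonicalInformant (L : Set ℕ) : Canonical (canonicalInformant L) := by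
  intro x
  by_cases hx : x ∈ L <;> simp [canonicalInformant, hx]

theorem mem_range_canonicalInformant {L : Set ℕ} {a : Datum} :
    a ∈ Set.range (canonicalInformant L) ↔ canonicalInformant L a.1 = a := by
  constructor
  · rintro ⟨x, rfl⟩
    rfl
  · exact fun ha => ⟨a.1, ha⟩

theorem isInformant_iff_range_eq {I : Informant} {L : Set ℕ} :
    IsInformant I L ↔ Set.range I = Set.range (canonicalInformant L) := by
  simp only [IsInformant, posI, negI, Set.ext_iff, Set.mem_ofPred_eq, Prod.forall, Bool.forall_bool,
    canonicalInformant, Set.mem_range, Set.mem_compl_iff, Prod.mk.injEq, exists_eq_left,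
    decide_eq_false_iff_not, decide_eq_true_eq, forall_and]
  exact and_comm

theorem isInformant_canonicalInformant (L : Set ℕ) : IsInformant (canonicalInformant L) L :=
  isInformant_iff_range_eq.2 rfl

theorem IsInformant.isInf {I : Informant} {L : Set ℕ} (hI : IsInformant I L) : IsInf I :=
  ⟨rfl, hI.1 ▸ hI.2⟩

/-- The largest `m` such that every `x < m` is decided, positively or negatively, by the data in
`σ`. Bounding the search by the length of `σ` loses nothing, since deciding `m` numbers takes `m`
data, and makes the function primitive recursive. -/
def decidedLength (σ : Seq) : ℕ :=
  Nat.findGreatest (fun m => ∀ x < m, ∃ a ∈ σ, a.1 = x) σ.length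

theorem le_decidedLength_iff {σ : Seq} {m : ℕ} :
    m ≤ decidedLength σ ↔ ∀ x < m, ∃ a ∈ σ, a.1 = x := by
  constructor
  · intro hm x hx
    have hspec : ∀ x < decidedLength σ, ∃ a ∈ σ, a.1 = x :=
      Nat.findGreatest_spec (P := fun m => ∀ x < m, ∃ a ∈ σ, a.1 = x) (Nat.zero_le _) (by simp)
    exact hspec x (hx.trans_le hm)
  · intro hm
    refine Nat.le_findGreatest ?_ hm
    have hsub : List.range m ⊆ σ.map Prod.fst := fun x hx =>
      List.mem_map.2 (hm x (List.mem_range.1 hx))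
    simpa using (List.nodup_range.subperm hsub).length_le

theorem decidedLength_mono {σ τ : Seq} (hστ : contentS σ ⊆ contentS τ) :
    decidedLength σ ≤ decidedLength τ :=
  le_decidedLength_iff.2 fun x hx =>
    let ⟨a, ha, hax⟩ := le_decidedLength_iff.1 le_rfl x hx
    ⟨a, hστ ha, hax⟩

theorem IsInformant.exists_le_decidedLength {I : Informant} {L : Set ℕ} (hI : IsInformant I L)
    (m : ℕ) : ∃ n, m ≤ decidedLength (segment I n) := by
  have hdecided : ∀ x, ∃ i, (I i).1 = x := by
    intro x
    obtain ⟨i, hi⟩ : canonicalInformant L x ∈ Set.range I :=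
      isInformant_iff_range_eq.1 hI ▸ Set.mem_range_self x
    exact ⟨i, congrArg Prod.fst hi⟩
  choose i hi using hdecided
  refine ⟨(Finset.range m).sup i + 1, le_decidedLength_iff.2 fun x hx => ⟨I (i x), ?_, hi x⟩⟩
  have hlt : i x < (Finset.range m).sup i + 1 :=
    Nat.lt_succ_of_le (Finset.le_sup (Finset.mem_range.2 hx))
  exact List.mem_map_of_mem (List.mem_range.2 hlt)

/-- The longest initial segment of a canonical informant that can be read off from the data in `σ`;
it depends on the content of `σ` only. -/
def canonicalSegment (σ : Seq) : Seq :=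
  (List.range (decidedLength σ)).map fun x => (x, decide ((x, true) ∈ σ))

theorem canonicalSegment_congr {σ τ : Seq} (hστ : contentS σ = contentS τ) :
    canonicalSegment σ = canonicalSegment τ := by
  have hlen : decidedLength σ = decidedLength τ :=
    (decidedLength_mono hστ.subset).antisymm (decidedLength_mono hστ.superset)
  have hmem : ∀ a, a ∈ σ ↔ a ∈ τ := Set.ext_iff.1 hστ
  simp only [canonicalSegment, hlen, hmem]

theorem contentS_segment_decidedLength_subset {σ : Seq} {L : Set ℕ}
    (hσ : contentS σ ⊆ Set.range (canonicalInformant L)) :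
    contentS (segment (canonicalInformant L) (decidedLength σ)) ⊆ contentS σ := by
  rw [contentS_segment]
  rintro _ ⟨x, hx, rfl⟩
  obtain ⟨a, ha, rfl⟩ := le_decidedLength_iff.1 le_rfl x hx
  rwa [mem_range_canonicalInformant.1 (hσ ha)]

theorem canonicalSegment_eq_segment {σ : Seq} {L : Set ℕ}
    (hσ : contentS σ ⊆ Set.range (canonicalInformant L)) :
    canonicalSegment σ = segment (canonicalInformant L) (decidedLength σ) := by
  refine List.map_congr_left fun x hx => ?_
  have hmem : canonicalInformant L x ∈ σ :=
    contentS_segment_decidedLength_subset hσ (List.mem_map_of_mem hx)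
  have hiff : (x, true) ∈ σ ↔ x ∈ L := by
    constructor
    · intro h
      simpa [canonicalInformant] using mem_range_canonicalInformant.1 (hσ h)
    · intro h
      simpa [canonicalInformant, h] using hmem
  simp only [canonicalInformant, hiff]

theorem primrec_decidedLength : Primrec decidedLength := by
  have hfst : PrimrecRel fun (a : Datum) (x : ℕ) => a.1 = x :=
    Primrec.eq.comp (Primrec.fst.comp Primrec.fst) Primrec.snd
  have hmem : PrimrecRel fun (x : ℕ) (σ : Seq) => ∃ a ∈ σ, a.1 = x :=
    hfst.exists_mem_list.comp Primrec.snd Primrec.fst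
  have hdecided : PrimrecRel fun (m : ℕ) (σ : Seq) => ∀ x < m, ∃ a ∈ σ, a.1 = x :=
    (hmem.forall_mem_list.comp (Primrec.list_range.comp Primrec.fst) Primrec.snd).of_eq (by simp)
  exact Primrec.nat_findGreatest Primrec.list_length (hdecided.comp Primrec.snd Primrec.fst)

theorem primrec_canonicalSegment : Primrec canonicalSegment := by
  have hmem : PrimrecRel fun (σ : Seq) (a : Datum) => a ∈ σ :=
    PrimrecRel.of_eq Primrec.eq.exists_mem_list (by simp)
  have hpos : Primrec₂ fun (σ : Seq) (x : ℕ) => decide ((x, true) ∈ σ) :=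
    (hmem.comp Primrec.fst (Primrec.pair Primrec.snd (Primrec.const true))).decide
  exact Primrec.list_map (Primrec.list_range.comp primrec_decidedLength)
    (Primrec₂.pair.comp₂ Primrec₂.right hpos)

/-- The set-driven learner that runs the `G`-learner `h` on the canonical segment of the given data.
The code of a finite set is the code of a list of its elements, so it is decoded as a list; the
value `[]` on non-codes is irrelevant. -/
def setDriven (h : Learner) : Learner := fun n =>
  h (Encodable.encode (canonicalSegment ((Encodable.decode n).getD [])))

theorem partrec_setDriven {h : Learner} (hh : Partrec h) : Partrec (setDriven h) :=
  have hdecode : Primrec fun n : ℕ => (Encodable.decode (α := Seq) n).getD [] :=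
    Primrec.option_getD.comp Primrec.decode (Primrec.const [])
  hh.comp (Primrec.encode.comp (primrec_canonicalSegment.comp hdecode)).to_comp

theorem Sdop_setDriven_apply (h : Learner) (I : Informant) (n : ℕ) :
    Sdop (setDriven h) I n = h (Encodable.encode (canonicalSegment (segment I n))) := by
  obtain ⟨σ, hcode, hσ⟩ := exists_list_encode_eq (segment I n).toFinset
  have hcontent : contentS σ = contentS (segment I n) :=
    Set.ext fun a => (hσ a).trans List.mem_toFinset
  rw [Sdop, setDriven, hcode, Encodable.encodek, Option.getD_some, canonicalSegment_congr hcontent]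

theorem IsInformant.Sdop_setDriven {I : Informant} {L : Set ℕ} (hI : IsInformant I L)
    (h : Learner) :
    Sdop (setDriven h) I =
      fun n => Gop h (canonicalInformant L) (decidedLength (segment I n)) := by
  funext n
  have hcontent := contentS_segment_subset_range I n
  rw [isInformant_iff_range_eq.1 hI] at hcontent
  rw [Sdop_setDriven_apply, canonicalSegment_eq_segment hcontent, Gop]

theorem LearnsWith.setDriven {δ : Restriction} (hδ : Delayable δ) {h : Learner} {L : Set ℕ}
    (hL : LearnsWith Canonical Gop δ h L) : LearnsWith AllI Sdop δ (setDriven h) L := by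
  refine ⟨hL.1, fun I _ hI => ?_⟩
  have hrange : Set.range I = Set.range (canonicalInformant L) := isInformant_iff_range_eq.1 hI
  have hcan : IsInformant (canonicalInformant L) L := isInformant_canonicalInformant L
  rw [hI.Sdop_setDriven]
  exact hδ (canonicalInformant L) I hcan.isInf hI.isInf hrange.symm _ _
    (fun _ _ hmn => decidedLength_mono (contentS_segment_mono I hmn))
    hI.exists_le_decidedLength
    (hL.2 _ (canonical_canonicalInformant L) hcan)
    fun n => contentS_segment_decidedLength_subset (hrange ▸ contentS_segment_subset_range I n)

/-- For every delayable learning restriction `δ`,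
`[Inf_can G δ] = [Inf Sd δ]`. -/
theorem canonical_G_eq_Sd_of_delayable (δ : Restriction) (hδ : Delayable δ) :
    Learnable TT AllL Canonical Gop δ = Learnable TT AllL AllI Sdop δ := by
  ext 𝓛
  constructor
  · rintro ⟨h, hh, -, -, hlearns⟩
    exact ⟨setDriven h, partrec_setDriven hh, trivial, fun _ _ _ => trivial,
      fun L hL => (hlearns L hL).setDriven hδ⟩
  · rintro ⟨h, hh, -, -, hlearns⟩
    exact ⟨h, hh, trivial, fun _ _ _ => trivial, fun L hL => (hlearns L hL).Gop_of_Sdop⟩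

end InfBc
end

section
/- There exists a class of languages in [Inf G Mon Bc] that is not in [Inf G Caut_Tar Bc], and there exists a class of languages in [Inf G Mon Bc] that is not in [Inf G Caut_∞ Bc]; in fact the class {ℕ \ D | D ⊆ ℕ finite} witnesses both separations. -/
open Filter Classical

namespace InfBc

/-!
Conjecturing `ℕ` minus the negative data seen so far gives a superset of the target at every stage,
so no element of the target is ever lost, and the conjecture is exact once the finitely many
missing numbers have been seen.

Conversely, a behaviorally correct learner that is shown `ℕ` in increasing order conjectures `ℕ`
after some number `n` of data. These are also the first `n` data for `ℕ \ {n}`, so on this target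
the learner makes a conjecture that is too large, and it must later shrink it to the infinite set
`ℕ \ {n}`.
-/

/-! ### Finite and infinite data -/

theorem mem_segment {I : Informant} {n : ℕ} {d : Datum} : d ∈ segment I n ↔ ∃ i < n, I i = d := by
  simp [segment]

theorem segment_congr {I J : Informant} {n : ℕ} (h : ∀ i < n, I i = J i) :
    segment I n = segment J n :=
  List.map_congr_left fun i hi => h i (List.mem_range.1 hi)

theorem negS_segment_subset_negI (I : Informant) (n : ℕ) : negS (segment I n) ⊆ negI I :=
  fun _ hx => (mem_segment.1 hx).imp fun _ hi => hi.2

theorem eventually_negS_segment_eq_negI {I : Informant} (hI : (negI I).Finite) :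
    ∀ᶠ n in atTop, negS (segment I n) = negI I := by
  have all_seen : ∀ᶠ n in atTop, ∀ x ∈ negI I, x ∈ negS (segment I n) := by
    rw [eventually_all_finite hI]
    rintro x ⟨i, hi⟩
    filter_upwards [eventually_gt_atTop i] with n hn
    exact mem_segment.2 ⟨i, hn, hi⟩
  filter_upwards [all_seen] with n hn
  exact (negS_segment_subset_negI I n).antisymm hn

theorem IsInformant.compl_negI {I : Informant} {L : Set ℕ} (hI : IsInformant I L) :
    (negI I)ᶜ = posI I := by
  rw [hI.2, compl_compl, hI.1]

theorem segment_canonicalInformant_congr {L L' : Set ℕ} {n : ℕ} (h : ∀ i < n, i ∈ L ↔ i ∈ L') :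
    segment (canonicalInformant L) n = segment (canonicalInformant L') n :=
  segment_congr fun i hi => by simp only [canonicalInformant, h i hi]

/-! ### Computable learners from uniformly enumerable conjectures -/

/- The s-m-n theorem: `curry` fixes the first component of a code that semidecides `x ∈ S a`. -/
theorem exists_computable_W_eq {α : Type*} [Primcodable α] {S : α → Set ℕ}
    (hS : REPred fun p : α × ℕ => p.2 ∈ S p.1) :
    ∃ f : α → ℕ, Computable f ∧ ∀ a, W (f a) = S a := by
  obtain ⟨c, hc⟩ := Nat.Partrec.Code.exists_code.1 hS
  refine ⟨fun a => Encodable.encode (c.curry (Encodable.encode a)), ?_, fun a => ?_⟩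
  · exact (Primrec.encode.comp
      (Nat.Partrec.Code.primrec₂_curry.comp (Primrec.const c) Primrec.encode)).to_comp
  · ext x
    simp [W, Nat.Partrec.Code.eval_curry, hc, Part.assert]

theorem rePred_mem_compl_negS : REPred fun p : Seq × ℕ => p.2 ∈ (negS p.1)ᶜ := by
  have mem_primrec : PrimrecRel fun (σ : Seq) (d : Datum) => ∃ a ∈ σ, a = d :=
    Primrec.eq.exists_mem_list
  have mem_compl_primrec : PrimrecPred fun p : Seq × ℕ => p.2 ∈ (negS p.1)ᶜ :=
    (mem_primrec.comp Primrec.fst (Primrec.snd.pair (Primrec.const false))).not.of_eq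
      fun p => by simp [negS]
  exact mem_compl_primrec.computablePred.to_re

/-- The learner that conjectures `f σ` on the data `σ`. As learners read coded sequences, it first
decodes its input; it is undefined on numbers that do not code a sequence. -/
def seqLearner (f : Seq → ℕ) : Learner := fun n => (Encodable.decode (α := Seq) n : Part Seq).map f

theorem partrec_seqLearner {f : Seq → ℕ} (hf : Computable f) : Partrec (seqLearner f) :=
  Computable.decode.ofOption.map (hf.comp Computable.snd).to₂

theorem gop_seqLearner (f : Seq → ℕ) (I : Informant) (n : ℕ) :
    Gop (seqLearner f) I n = Part.some (f (segment I n)) := by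
  simp [Gop, seqLearner]

/-! ### Monotone learning of the cofinite languages -/

/-- The class of all languages with finite complement. -/
def cofiniteLanguages : Set (Set ℕ) := {L | ∃ D : Set ℕ, D.Finite ∧ L = Dᶜ}

theorem mem_cofiniteLanguages_iff {L : Set ℕ} : L ∈ cofiniteLanguages ↔ Lᶜ.Finite :=
  ⟨by rintro ⟨D, hD, rfl⟩; rwa [compl_compl], fun hL => ⟨Lᶜ, hL, (compl_compl L).symm⟩⟩

theorem mon_of_forall_posI_subset {p : HypSeq} {I : Informant}
    (h : ∀ t, ∀ e ∈ p t, posI I ⊆ W e) : Mon p I :=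
  fun _ t _ _ _ e' he' _ hx => ⟨h t e' he' hx.2, hx.2⟩

section

variable {f : Seq → ℕ} {I : Informant} {L : Set ℕ}

theorem mon_gop_of_W_eq_compl_negS (hf : ∀ σ, W (f σ) = (negS σ)ᶜ) (hI : IsInformant I L) :
    Mon (Gop (seqLearner f) I) I := by
  refine mon_of_forall_posI_subset fun t e he => ?_
  rw [gop_seqLearner, Part.mem_some_iff] at he
  rw [he, hf, ← hI.compl_negI]
  exact Set.compl_subset_compl.2 (negS_segment_subset_negI I t)

theorem bc_gop_of_W_eq_compl_negS (hf : ∀ σ, W (f σ) = (negS σ)ᶜ) (hI : IsInformant I L)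
    (hL : Lᶜ.Finite) : Bc (Gop (seqLearner f) I) I := by
  have hneg : (negI I).Finite := hI.2 ▸ hL
  filter_upwards [eventually_negS_segment_eq_negI hneg] with n hn
  refine ⟨f (segment I n), gop_seqLearner f I n ▸ Part.mem_some _, ?_⟩
  rw [hf, hn, hI.compl_negI]

end

theorem Bc.re_posI {p : HypSeq} {I : Informant} (hp : Bc p I) : RE (posI I) := by
  obtain ⟨_, e, -, he⟩ := hp.exists
  exact ⟨e, he⟩

theorem cofiniteLanguages_mem_learnable_mon_bc {P : Informant → Prop} :
    cofiniteLanguages ∈ Learnable TT AllL P Gop (fun p I => Mon p I ∧ Bc p I) := by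
  obtain ⟨f, f_computable, hf⟩ :=
    exists_computable_W_eq (S := fun σ => (negS σ)ᶜ) rePred_mem_compl_negS
  refine ⟨seqLearner f, partrec_seqLearner f_computable, trivial, fun _ _ _ => trivial,
    fun L hL => ?_⟩
  have bc_of_isInformant (I : Informant) (hI : IsInformant I L) : Bc (Gop (seqLearner f) I) I :=
    bc_gop_of_W_eq_compl_negS hf hI (mem_cofiniteLanguages_iff.1 hL)
  have hcan := isInformant_canonicalInformant L
  exact ⟨hcan.1 ▸ (bc_of_isInformant _ hcan).re_posI,
    fun I _ hI => ⟨mon_gop_of_W_eq_compl_negS hf hI, bc_of_isInformant I hI⟩⟩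

/-! ### Obstructions to cautious learning -/

/-- `L` is the pointwise limit of languages of the class `𝓛` that are proper subsets of `L`:
no initial segment of the canonical informant for `L` excludes all of them. -/
def IsLimitOfProperSubsets (𝓛 : Set (Set ℕ)) (L : Set ℕ) : Prop :=
  ∀ n, ∃ L' ∈ 𝓛, L' ⊂ L ∧ ∀ i < n, i ∈ L' ↔ i ∈ L

theorem IsLimitOfProperSubsets.mono {𝓛 𝓛' : Set (Set ℕ)} {L : Set ℕ}
    (hL : IsLimitOfProperSubsets 𝓛 L) (h : 𝓛 ⊆ 𝓛') : IsLimitOfProperSubsets 𝓛' L :=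
  fun n => (hL n).imp fun _ hL' => ⟨h hL'.1, hL'.2⟩

theorem IsLimitOfProperSubsets.exists_overgeneralization {𝓛 : Set (Set ℕ)} {L : Set ℕ}
    {h : Learner} (hL : IsLimitOfProperSubsets 𝓛 L)
    (hbc : Bc (Gop h (canonicalInformant L)) (canonicalInformant L)) :
    ∃ L' ∈ 𝓛, L' ⊂ L ∧ ∃ n, ∃ e ∈ Gop h (canonicalInformant L') n, W e = L := by
  obtain ⟨n, e, he, hWe⟩ := hbc.exists
  obtain ⟨L', hL', hssub, hagree⟩ := hL n
  refine ⟨L', hL', hssub, n, e, ?_, hWe.trans (isInformant_canonicalInformant L).1⟩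
  rwa [Gop, segment_canonicalInformant_congr hagree]

section

variable {α : Restriction} {C : Learner → Prop} {P : Informant → Prop} {𝓛 : Set (Set ℕ)}
  {L : Set ℕ}

theorem LearnsWith.on_canonicalInformant {β : InteractionOperator} {δ : Restriction} {h : Learner}
    (hlearn : LearnsWith P β δ h L) (hP : ∀ I, Canonical I → P I) :
    δ (β h (canonicalInformant L)) (canonicalInformant L) :=
  hlearn.2 _ (hP _ (canonical_canonicalInformant L)) (isInformant_canonicalInformant L)

theorem notMem_learnable_cautTar_bc (hP : ∀ I, Canonical I → P I) (hL : L ∈ 𝓛)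
    (hlim : IsLimitOfProperSubsets 𝓛 L) :
    𝓛 ∉ Learnable α C P Gop (fun p I => CautTar p I ∧ Bc p I) := by
  rintro ⟨h, -, -, -, hlearn⟩
  obtain ⟨L', hL', hssub, n, e, he, hWe⟩ :=
    hlim.exists_overgeneralization ((hlearn L hL).on_canonicalInformant hP).2
  have hcaut := ((hlearn L' hL').on_canonicalInformant hP).1
  refine hcaut n e he ?_
  rwa [hWe, (isInformant_canonicalInformant L').1]

theorem notMem_learnable_cautInf_bc (hP : ∀ I, Canonical I → P I) (hL : L ∈ 𝓛)
    (hlim : IsLimitOfProperSubsets (𝓛 ∩ {L' | L'.Infinite}) L) :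
    𝓛 ∉ Learnable α C P Gop (fun p I => CautInf p I ∧ Bc p I) := by
  rintro ⟨h, -, -, -, hlearn⟩
  obtain ⟨L', ⟨hL', hinf⟩, hssub, n, e, he, hWe⟩ :=
    hlim.exists_overgeneralization ((hlearn L hL).on_canonicalInformant hP).2
  obtain ⟨hcaut, hbc⟩ := (hlearn L' hL').on_canonicalInformant hP
  obtain ⟨t, ⟨e', he', hWe'⟩, hnt⟩ := (hbc.and (eventually_gt_atTop n)).exists
  rw [(isInformant_canonicalInformant L').1] at hWe'
  have hfin : (W e').Finite := hcaut n t hnt e he e' he' (by rwa [hWe, hWe'])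
  exact hinf (hWe' ▸ hfin)

end

theorem univ_mem_cofiniteLanguages : Set.univ ∈ cofiniteLanguages := by
  simp [mem_cofiniteLanguages_iff]

theorem cofiniteLanguages_subset_infinite : cofiniteLanguages ⊆ {L | L.Infinite} :=
  fun L hL => compl_compl L ▸ (mem_cofiniteLanguages_iff.1 hL).infinite_compl

theorem isLimitOfProperSubsets_cofiniteLanguages_univ :
    IsLimitOfProperSubsets cofiniteLanguages Set.univ := by
  refine fun n => ⟨{n}ᶜ, ⟨{n}, Set.finite_singleton n, rfl⟩, ?_, fun i hi => ?_⟩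
  · simp [Set.ssubset_univ_iff]
  · simp [hi.ne]

/-- The class of all cofinite languages is in `[Inf G Mon Bc]`
but neither in `[Inf G Caut_Tar Bc]` nor in `[Inf G Caut_∞ Bc]`. -/
theorem cautTar_and_cautInf_proper :
    {L : Set ℕ | ∃ D : Set ℕ, D.Finite ∧ L = Dᶜ} ∈
        Learnable TT AllL AllI Gop (fun p I => Mon p I ∧ Bc p I) ∧
    {L : Set ℕ | ∃ D : Set ℕ, D.Finite ∧ L = Dᶜ} ∉
        Learnable TT AllL AllI Gop (fun p I => CautTar p I ∧ Bc p I) ∧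
    {L : Set ℕ | ∃ D : Set ℕ, D.Finite ∧ L = Dᶜ} ∉
        Learnable TT AllL AllI Gop (fun p I => CautInf p I ∧ Bc p I) := by
  have hlim := isLimitOfProperSubsets_cofiniteLanguages_univ
  have hinf := cofiniteLanguages_subset_infinite
  exact ⟨cofiniteLanguages_mem_learnable_mon_bc,
    notMem_learnable_cautTar_bc (fun _ _ => trivial) univ_mem_cofiniteLanguages hlim,
    notMem_learnable_cautInf_bc (fun _ _ => trivial) univ_mem_cofiniteLanguages
      (hlim.mono fun _ hL => ⟨hL, hinf hL⟩)⟩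

end InfBc
end
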